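/- Let L, N be a lightlike frame along the unit-speed spacelike curve γ̂ and fix u ∈ I; assume the first components L₀(u) of L(u) and N₀(u) of N(u) are nonzero. Let ṽ = (1, v₁, v₂) with v₁² + v₂² = 1 (so ṽ is lightlike). Then ⟨e(u), ṽ⟩ = 0 if and only if ṽ = L(u)/L₀(u) or ṽ = N(u)/N₀(u). -/

import Mathlib

open scoped Topology

noncomputable section

/-- Points/vectors of Lorentz–Minkowski 3-space `ℝ³₁`. -/
abbrev R3 : Type := Fin 3 → ℝ

/-- The Lorentz–Minkowski scalar product `⟨x,y⟩ = -x₀y₀ + x₁y₁ + x₂y₂`. -/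
def mink (x y : R3) : ℝ := -(x 0 * y 0) + x 1 * y 1 + x 2 * y 2

/-- `(L, N)` is a lightlike frame along the unit-speed spacelike curve `γ` on `I`:
`γ, L, N` are smooth on `I`, `⟨e,e⟩ = 1` (with `e = γ'`), `⟨e,L⟩ = ⟨e,N⟩ = 0`,
`⟨L,L⟩ = ⟨N,N⟩ = 0` and `⟨L,N⟩ = 1` on `I`. -/
structure LightlikeFrame (I : Set ℝ) (γ L N : ℝ → R3) : Prop where
  smooth_gamma : ContDiffOn ℝ (⊤ : ℕ∞) γ I
  smooth_L : ContDiffOn ℝ (⊤ : ℕ∞) L I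
  smooth_N : ContDiffOn ℝ (⊤ : ℕ∞) N I
  unit_speed : ∀ u ∈ I, mink (deriv γ u) (deriv γ u) = 1
  eL : ∀ u ∈ I, mink (deriv γ u) (L u) = 0
  eN : ∀ u ∈ I, mink (deriv γ u) (N u) = 0
  LL : ∀ u ∈ I, mink (L u) (L u) = 0
  NN : ∀ u ∈ I, mink (N u) (N u) = 0
  LN : ∀ u ∈ I, mink (L u) (N u) = 1

/-- `α_L = ⟨γ'', L⟩`. -/
def alphaL (γ L : ℝ → R3) (u : ℝ) : ℝ := mink (deriv (deriv γ) u) (L u)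

/-- `α_N = ⟨γ'', N⟩`. -/
def alphaN (γ N : ℝ → R3) (u : ℝ) : ℝ := mink (deriv (deriv γ) u) (N u)

/-- `α_G = ⟨L, N'⟩`. -/
def alphaG (L N : ℝ → R3) (u : ℝ) : ℝ := mink (L u) (deriv N u)

/-- `σ_L = α_L' + α_L α_G`. -/
def sigmaL (γ L N : ℝ → R3) (u : ℝ) : ℝ :=
  deriv (alphaL γ L) u + alphaL γ L u * alphaG L N u

/-- `σ_N = α_N' - α_N α_G`. -/
def sigmaN (γ L N : ℝ → R3) (u : ℝ) : ℝ :=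
  deriv (alphaN γ N) u - alphaN γ N u * alphaG L N u

/- In a three-dimensional space the hyperplane `e^⊥` is the plane spanned by the linearly
independent vectors `L` and `N`, and `⟨α L + β N, α L + β N⟩ = 2 α β ⟨L, N⟩` vanishes only when
`α = 0` or `β = 0`. Hence the lightlike vectors of `e^⊥` lie on the line of `L` or on that
of `N`. -/

section LinearAlgebra

open Submodule

theorem ker_eq_span_range_of_linearIndependent {K V ι : Type*} [Field K] [AddCommGroup V]
    [Module K V] [Fintype ι] {f : Module.Dual K V} (hf : f ≠ 0) {b : ι → V}
    (hb : LinearIndependent K b) (hfb : ∀ i, f (b i) = 0)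
    (hcard : Fintype.card ι + 1 = Module.finrank K V) :
    LinearMap.ker f = span K (Set.range b) := by
  have : FiniteDimensional K V := Module.finite_of_finrank_pos (by lia)
  have hle : span K (Set.range b) ≤ LinearMap.ker f :=
    span_le.mpr (Set.range_subset_iff.mpr hfb)
  refine (eq_of_le_of_finrank_eq hle ?_).symm
  have hker := Module.Dual.finrank_ker_add_one_of_ne_zero hf
  rw [finrank_span_eq_card hb]
  lia

section Domain

variable {R M : Type*} [CommRing R] [IsDomain R] [AddCommGroup M] [Module R M]
  {B : LinearMap.BilinForm R M} {x y v : M}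

theorem linearIndependent_pair_of_apply_self_eq_zero (hx : B x x = 0) (hxy : B x y ≠ 0) :
    LinearIndependent R ![x, y] := by
  refine LinearIndependent.pair_iff.mpr fun s t hst => ?_
  have ht : t = 0 := by simpa [hx, hxy] using congrArg (B x) hst
  have hs : s = 0 := by simpa [ht, hxy] using congrArg (B · y) hst
  exact ⟨hs, ht⟩

theorem mem_span_pair_and_apply_self_eq_zero_iff [NeZero (2 : R)] (hB : B.IsSymm)
    (hx : B x x = 0) (hy : B y y = 0) (hxy : B x y ≠ 0) :
    v ∈ span R {x, y} ∧ B v v = 0 ↔ v ∈ span R {x} ∨ v ∈ span R {y} := by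
  have apply_self (α β : R) : B (α • x + β • y) (α • x + β • y) = 2 * (α * β * B x y) := by
    simp only [map_add, map_smul, LinearMap.add_apply, LinearMap.smul_apply, smul_eq_mul, hx, hy,
      hB.eq y x]
    ring
  simp only [mem_span_pair, mem_span_singleton]
  constructor
  · rintro ⟨⟨α, β, rfl⟩, hv⟩
    rw [apply_self] at hv
    have hαβ : α = 0 ∨ β = 0 := by simpa [hxy, two_ne_zero] using hv
    rcases hαβ with rfl | rfl
    · exact .inr ⟨β, by simp⟩
    · exact .inl ⟨α, by simp⟩
  · rintro (⟨α, rfl⟩ | ⟨β, rfl⟩)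
    · exact ⟨⟨α, 0, by simp⟩, by simp [hx]⟩
    · exact ⟨⟨0, β, by simp⟩, by simp [hy]⟩

end Domain

theorem apply_eq_zero_and_apply_self_eq_zero_iff_mem_span_singleton {K V : Type*} [Field K]
    [NeZero (2 : K)] [AddCommGroup V] [Module K V] (hV : Module.finrank K V = 3)
    {B : LinearMap.BilinForm K V}
    (hB : B.IsSymm) {e x y v : V} (he : B e ≠ 0) (hex : B e x = 0) (hey : B e y = 0)
    (hx : B x x = 0) (hy : B y y = 0) (hxy : B x y ≠ 0) :
    B e v = 0 ∧ B v v = 0 ↔ v ∈ span K {x} ∨ v ∈ span K {y} := by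
  have hker : LinearMap.ker (B e) = span K {x, y} := by
    rw [← Matrix.range_cons_cons_empty x y ![]]
    exact ker_eq_span_range_of_linearIndependent he
      (linearIndependent_pair_of_apply_self_eq_zero hx hxy) (Fin.forall_fin_two.mpr ⟨hex, hey⟩)
      (by simp [hV])
  rw [← mem_span_pair_and_apply_self_eq_zero_iff hB hx hy hxy, ← hker, LinearMap.mem_ker]

theorem mem_span_singleton_iff_eq_inv_smul {K ι : Type*} [Field K] {i : ι} {x v : ι → K}
    (hv : v i = 1) : v ∈ span K {x} ↔ v = (x i)⁻¹ • x := by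
  refine ⟨fun h => ?_, fun h => mem_span_singleton.mpr ⟨_, h.symm⟩⟩
  obtain ⟨c, rfl⟩ := mem_span_singleton.mp h
  rw [eq_inv_of_mul_eq_one_left hv]

end LinearAlgebra

/-- The Lorentz–Minkowski scalar product as a bilinear form. -/
def minkForm : LinearMap.BilinForm ℝ R3 :=
  LinearMap.mk₂ ℝ mink
    (fun x x' y => by simp only [mink, Pi.add_apply]; ring)
    (fun c x y => by simp only [mink, Pi.smul_apply, smul_eq_mul]; ring)
    (fun x y y' => by simp only [mink, Pi.add_apply]; ring)
    (fun c x y => by simp only [mink, Pi.smul_apply, smul_eq_mul]; ring)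

theorem minkForm_apply (x y : R3) : minkForm x y = mink x y := rfl

theorem isSymm_minkForm : minkForm.IsSymm :=
  ⟨fun x y => by simp only [minkForm_apply, mink, mul_comm]⟩

theorem ker_minkForm : LinearMap.ker minkForm = ⊥ := by
  refine LinearMap.ker_eq_bot'.mpr fun x hx => ?_
  have mink_single (i : Fin 3) : mink x (Pi.single i 1) = 0 := LinearMap.congr_fun hx _
  ext i
  fin_cases i
  · simpa [mink] using mink_single 0
  · simpa [mink] using mink_single 1
  · simpa [mink] using mink_single 2

theorem mink_cons_one_self_eq_zero_iff {v₁ v₂ : ℝ} :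
    mink ![1, v₁, v₂] ![1, v₁, v₂] = 0 ↔ v₁ ^ 2 + v₂ ^ 2 = 1 := by
  simp only [mink, Matrix.cons_val]
  constructor <;> intro h <;> linear_combination h

theorem lightlike_directions_general {e L N v : R3} (he : e ≠ 0) (heL : mink e L = 0)
    (heN : mink e N = 0) (hLL : mink L L = 0) (hNN : mink N N = 0) (hLN : mink L N ≠ 0)
    (hv₀ : v 0 = 1) (hv : mink v v = 0) :
    mink e v = 0 ↔ v = (L 0)⁻¹ • L ∨ v = (N 0)⁻¹ • N := by
  have hform : minkForm e ≠ 0 := fun h => he (LinearMap.ker_eq_bot'.mp ker_minkForm e h)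
  have hspan := apply_eq_zero_and_apply_self_eq_zero_iff_mem_span_singleton (v := v)
    (Module.finrank_fin_fun ℝ) isSymm_minkForm hform heL heN hLL hNN hLN
  rwa [mem_span_singleton_iff_eq_inv_smul hv₀, mem_span_singleton_iff_eq_inv_smul hv₀,
    minkForm_apply, minkForm_apply, and_iff_left hv] at hspan

/-- For a lightlike vector `ṽ = (1, v₁, v₂)` with `v₁² + v₂² = 1`,
`⟨e(u), ṽ⟩ = 0` iff `ṽ = L(u)/L₀(u)` or `ṽ = N(u)/N₀(u)`. -/
theorem lightlike_directions (a b : ℝ) (γ L N : ℝ → R3)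
    (hframe : LightlikeFrame (Set.Ioo a b) γ L N)
    (u : ℝ) (hu : u ∈ Set.Ioo a b)
    (hL0 : L u 0 ≠ 0) (hN0 : N u 0 ≠ 0)
    (v₁ v₂ : ℝ) (hv : v₁ ^ 2 + v₂ ^ 2 = 1) :
    mink (deriv γ u) ![1, v₁, v₂] = 0 ↔
      (![1, v₁, v₂] : R3) = (L u 0)⁻¹ • L u ∨ (![1, v₁, v₂] : R3) = (N u 0)⁻¹ • N u := by
  have he : deriv γ u ≠ 0 := fun h => by simpa [mink, h] using hframe.unit_speed u hu
  exact lightlike_directions_general he (hframe.eL u hu) (hframe.eN u hu) (hframe.LL u hu)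
    (hframe.NN u hu) (by simp [hframe.LN u hu]) rfl (mink_cons_one_self_eq_zero_iff.mpr hv)
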